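/- There exists an absolute constant C > 0 such that for all integers p, p' ≥ 1, every tuple 𝐤 = (𝐤₁,…,𝐤_p) of positive integers, and every tuple 𝐤' = (𝐤'₁,…,𝐤'_{p'}) of positive integers, one has ∑_{ℓ=1}^{∞} Γ_{(𝐤,ℓ)} · Γ_{(𝐤',ℓ)} ≤ C · Γ_{(𝐤,𝐤')}, where (𝐤,ℓ) denotes the tuple obtained by appending ℓ to 𝐤 and (𝐤,𝐤') the concatenation of 𝐤 and 𝐤'. -/

import Mathlib

/-!
Write `F n = ⟨n⟩⁻³`, and let `a`, `b` range over the signed sums of `𝐤`, `𝐤'`. As the set of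
signed sums is invariant under negation and `F` is even, `Γ_{(𝐤,ℓ)} = 2 ∑ₐ F (ℓ + a)` and
`Γ_{(𝐤',ℓ)} = 2 ∑_b F (ℓ - b)`, while `Γ_{(𝐤,𝐤')} = ∑_{a,b} F (a + b)`. The estimate then holds
term by term in `(a, b)`: since `⟨x - y⟩ ≤ ⟨x⟩ + ⟨y⟩` one has
`F x * F y ≤ 4 F (x - y) (F x + F y)` (`F_mul_le`), and taking `x = ℓ + a`, `y = ℓ - b`, for which
`x - y = a + b`, and summing over `ℓ` costs only the finite constant `∑_{n ∈ ℤ} F n`.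
-/

/-- The Japanese bracket `⟨a⟩ = (1 + a²)^{1/2}` of a real number. -/
noncomputable def jb (a : ℝ) : ℝ := Real.sqrt (1 + a ^ 2)

/-- `Γ_𝐦 = ∑_{ς ∈ {-1,1}^r} ⟨ς₁𝐦₁ + ⋯ + ς_r𝐦_r⟩^{-3}` for a tuple `𝐦` of positive
integers; signs are encoded by booleans. -/
noncomputable def Gam {r : ℕ} (m : Fin r → ℕ+) : ℝ :=
  ∑ ς : Fin r → Bool,
    (jb (∑ i, (if ς i then (1 : ℝ) else -1) * ((m i : ℕ) : ℝ)) ^ 3)⁻¹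

/-- The weight `⟨n⟩⁻³` at an integer `n`. -/
noncomputable def F (n : ℤ) : ℝ := (jb (n : ℝ) ^ 3)⁻¹

/-- The signed sum `ς₁𝐦₁ + ⋯ + ς_r𝐦_r`, as an integer. -/
def sgn {r : ℕ} (m : Fin r → ℕ+) (ς : Fin r → Bool) : ℤ :=
  ∑ i, (if ς i then (1 : ℤ) else -1) * ((m i : ℕ) : ℤ)

lemma one_le_jb (x : ℝ) : 1 ≤ jb x :=
  Real.one_le_sqrt.2 (by nlinarith [sq_nonneg x])

lemma jb_sq (x : ℝ) : jb x ^ 2 = 1 + x ^ 2 :=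
  Real.sq_sqrt (by positivity)

lemma jb_sub_le (x y : ℝ) : jb (x - y) ≤ jb x + jb y := by
  have hx := one_le_jb x
  have hy := one_le_jb y
  refine Real.sqrt_le_iff.2 ⟨by linarith, ?_⟩
  have hxy : |x * y| ≤ jb x * jb y := by
    refine abs_le_of_sq_le_sq ?_ (by positivity)
    rw [mul_pow, mul_pow, jb_sq, jb_sq]
    nlinarith [sq_nonneg x, sq_nonneg y]
  have := neg_abs_le (x * y)
  nlinarith [jb_sq x, jb_sq y]

lemma F_pos (n : ℤ) : 0 < F n := by
  have := one_le_jb n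
  unfold F
  positivity

lemma F_neg (n : ℤ) : F (-n) = F n := by
  simp [F, jb]

/-- Clearing denominators, this is `⟨x - y⟩³ ≤ 4 (⟨x⟩³ + ⟨y⟩³)`, the subadditivity of the bracket
combined with convexity of the cube. -/
lemma F_mul_le (x y : ℤ) : F x * F y ≤ 4 * F (x - y) * (F x + F y) := by
  have hx := one_le_jb x
  have hy := one_le_jb y
  have hd := one_le_jb ((x : ℝ) - y)
  have h := jb_sub_le x y
  unfold F
  push_cast
  generalize jb (x : ℝ) = A at *
  generalize jb (y : ℝ) = B at *
  generalize jb ((x : ℝ) - y) = D at *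
  have hD : D ^ 3 ≤ 4 * (A ^ 3 + B ^ 3) := by
    calc D ^ 3 ≤ (A + B) ^ 3 := by gcongr
      _ ≤ 4 * (A ^ 3 + B ^ 3) := by
        nlinarith [mul_nonneg (by linarith : 0 ≤ A + B) (sq_nonneg (A - B))]
  have e : 4 * (D ^ 3)⁻¹ * ((A ^ 3)⁻¹ + (B ^ 3)⁻¹)
      = (4 * (A ^ 3 + B ^ 3)) * (D ^ 3)⁻¹ * ((A ^ 3)⁻¹ * (B ^ 3)⁻¹) := by
    field_simp
    ring
  rw [e]
  refine le_mul_of_one_le_left (by positivity) ?_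
  rw [← div_eq_mul_inv]
  exact (one_le_div (by positivity)).2 hD

lemma summable_F : Summable F := by
  refine Summable.of_norm_bounded_eventually
    (Real.summable_one_div_int_pow.2 (one_lt_two)) ?_
  -- `n = 0` is excluded because there the majorant takes the junk value `1 / 0 = 0`.
  filter_upwards [(Set.finite_singleton (0 : ℤ)).compl_mem_cofinite] with n hn
  have hn' : (n : ℝ) ≠ 0 := by exact_mod_cast hn
  have h1 := one_le_jb n
  have h2 := jb_sq n
  rw [Real.norm_of_nonneg (F_pos n).le, F, ← one_div]
  refine one_div_le_one_div_of_le (by positivity) ?_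
  nlinarith [pow_le_pow_right₀ h1 (by norm_num : 2 ≤ 3)]

lemma sum_F_shift_le (s : Finset ℕ+) (c : ℤ) :
    ∑ ℓ ∈ s, F (((ℓ : ℕ) : ℤ) + c) ≤ ∑' n, F n := by
  have hinj : Function.Injective (fun ℓ : ℕ+ => ((ℓ : ℕ) : ℤ) + c) := by
    intro x y h
    simpa using h
  have h := summable_F.sum_le_tsum (s.map ⟨_, hinj⟩) (fun i _ => (F_pos i).le)
  simpa [Finset.sum_map] using h

lemma Gam_eq {r : ℕ} (m : Fin r → ℕ+) : Gam m = ∑ ς, F (sgn m ς) := by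
  unfold Gam F sgn
  push_cast
  rfl

lemma sum_sgn_neg {r : ℕ} (m : Fin r → ℕ+) (G : ℤ → ℝ) :
    ∑ ς, G (-sgn m ς) = ∑ ς, G (sgn m ς) := by
  refine Fintype.sum_equiv (Equiv.arrowCongr (Equiv.refl _) Equiv.boolNot) _ _ fun ς => ?_
  congr 1
  simp only [sgn, ← Finset.sum_neg_distrib]
  refine Finset.sum_congr rfl fun i _ => ?_
  cases h : ς i <;> simp [h]

lemma Gam_append {p q : ℕ} (k : Fin p → ℕ+) (k' : Fin q → ℕ+) :
    Gam (Fin.append k k') = ∑ ς, ∑ τ, F (sgn k ς + sgn k' τ) := by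
  rw [Gam_eq, ← Fintype.sum_prod_type']
  refine (Fintype.sum_equiv (Fin.appendEquiv p q) _ _ fun x => ?_).symm
  simp [sgn, Fin.appendEquiv, Fin.sum_univ_add]

lemma Gam_snoc {p : ℕ} (k : Fin p → ℕ+) (ℓ : ℕ+) :
    Gam (Fin.snoc k ℓ : Fin (p + 1) → ℕ+) = 2 * ∑ ς, F (((ℓ : ℕ) : ℤ) + sgn k ς) := by
  have h : Gam (Fin.snoc k ℓ : Fin (p + 1) → ℕ+)
      = ∑ b : Bool, ∑ ς, F (sgn k ς + (if b then (1 : ℤ) else -1) * ((ℓ : ℕ) : ℤ)) := by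
    rw [Gam_eq, ← Fintype.sum_prod_type']
    refine (Fintype.sum_equiv (Fin.snocEquiv fun _ => Bool) _ _ fun x => ?_).symm
    simp [sgn, Fin.snocEquiv, Fin.sum_univ_castSucc]
  have h' : ∑ ς, F (sgn k ς + (-1) * ((ℓ : ℕ) : ℤ)) = ∑ ς, F (((ℓ : ℕ) : ℤ) + sgn k ς) := by
    rw [← sum_sgn_neg k fun n => F (((ℓ : ℕ) : ℤ) + n)]
    refine Finset.sum_congr rfl fun ς _ => ?_
    rw [← F_neg]
    congr 1
    ring
  rw [h, Fintype.sum_bool]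
  simp only [if_true, Bool.false_eq_true, if_false, h', one_mul]
  simp only [add_comm (sgn k _)]
  ring

/-- **Summation estimate on the weights `Γ`.**
There is an absolute constant `C > 0` such that for all nonempty tuples `𝐤, 𝐤'` of positive
integers, `∑_{ℓ ≥ 1} Γ_{(𝐤,ℓ)} Γ_{(𝐤',ℓ)} ≤ C · Γ_{(𝐤,𝐤')}`. -/
theorem gamma_contraction :
    ∃ C > (0 : ℝ), ∀ (p p' : ℕ), 1 ≤ p → 1 ≤ p' →
      ∀ (k : Fin p → ℕ+) (k' : Fin p' → ℕ+),
        ∑' ℓ : ℕ+, Gam (Fin.snoc k ℓ) * Gam (Fin.snoc k' ℓ)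
          ≤ C * Gam (Fin.append k k') := by
  have hZ : 0 < ∑' n, F n := summable_F.tsum_pos (fun n => (F_pos n).le) 0 (F_pos 0)
  refine ⟨32 * ∑' n, F n, by positivity, fun p p' _ _ k k' => ?_⟩
  have hnn {r : ℕ} (m : Fin r → ℕ+) : 0 ≤ Gam m := by
    rw [Gam_eq]
    exact Finset.sum_nonneg fun ς _ => (F_pos _).le
  refine tsum_le_of_sum_le' (mul_nonneg (by positivity) (hnn _)) fun s => ?_
  have hprod (ℓ : ℕ+) : Gam (Fin.snoc k ℓ : Fin (p + 1) → ℕ+)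
        * Gam (Fin.snoc k' ℓ : Fin (p' + 1) → ℕ+)
      = ∑ ς, ∑ τ, 4 * (F (((ℓ : ℕ) : ℤ) + sgn k ς) * F (((ℓ : ℕ) : ℤ) + -sgn k' τ)) := by
    rw [Gam_snoc, Gam_snoc, ← sum_sgn_neg k' fun n => F (((ℓ : ℕ) : ℤ) + n)]
    rw [mul_mul_mul_comm, Finset.sum_mul_sum]
    simp only [Finset.mul_sum]
    norm_num
  have hterm (a b : ℤ) :
      ∑ ℓ ∈ s, 4 * (F (((ℓ : ℕ) : ℤ) + a) * F (((ℓ : ℕ) : ℤ) + -b))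
        ≤ (32 * ∑' n, F n) * F (a + b) := by
    calc ∑ ℓ ∈ s, 4 * (F (((ℓ : ℕ) : ℤ) + a) * F (((ℓ : ℕ) : ℤ) + -b))
        ≤ ∑ ℓ ∈ s, 16 * F (a + b) * (F (((ℓ : ℕ) : ℤ) + a) + F (((ℓ : ℕ) : ℤ) + -b)) := by
          refine Finset.sum_le_sum fun ℓ _ => ?_
          have h := F_mul_le (((ℓ : ℕ) : ℤ) + a) (((ℓ : ℕ) : ℤ) + -b)
          rw [show ((ℓ : ℕ) : ℤ) + a - (((ℓ : ℕ) : ℤ) + -b) = a + b by ring] at h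
          linarith
      _ ≤ 16 * F (a + b) * (∑' n, F n + ∑' n, F n) := by
          rw [← Finset.mul_sum, Finset.sum_add_distrib]
          have := F_pos (a + b)
          gcongr <;> exact sum_F_shift_le s _
      _ = (32 * ∑' n, F n) * F (a + b) := by ring
  rw [Finset.sum_congr rfl fun ℓ _ => hprod ℓ, Gam_append, Finset.sum_comm, Finset.mul_sum]
  refine Finset.sum_le_sum fun ς _ => ?_
  rw [Finset.sum_comm, Finset.mul_sum]
  exact Finset.sum_le_sum fun τ _ => hterm _ _
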